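/- Fix an integer N ≥ 2, t ∈ [0,1] and n ≥ 1, and assume ε_{N,n+1} < 1. Then ψ_{ρ^t_N}(n) ≤ (ε_{N,n} + ε_{N,n+1})/(1 − ε_{N,n+1}). -/

import Mathlib

open MeasureTheory Set Real Filter

/-- The Rényi-type continued fraction map `R_N`. -/
noncomputable def RN (N : ℕ) (x : ℝ) : ℝ :=
  if x = 1 then 0 else (N : ℝ) / (1 - x) - ⌊(N : ℝ) / (1 - x)⌋

/-- `digit N k x` is the `(k+1)`-st digit `a_{k+1}(x)`. -/
noncomputable def digit (N k : ℕ) (x : ℝ) : ℤ :=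
  ⌊(N : ℝ) / (1 - (RN N)^[k] x)⌋

/-- The conditional probability measure `ρ^t_N`, with density
`N(N-1+t)/[N-(1-x)(1-t)]²` on `[0,1]`. -/
noncomputable def rhoT (N : ℕ) (t : ℝ) : Measure ℝ :=
  (volume.restrict (Set.Icc (0 : ℝ) 1)).withDensity fun x =>
    ENNReal.ofReal ((N : ℝ) * ((N : ℝ) - 1 + t) / ((N : ℝ) - (1 - x) * (1 - t)) ^ 2)

/-- The invariant probability measure `ρ_N`, with density
`(log(N/(N-1)))⁻¹/(x+N-1)` on `[0,1]`. -/
noncomputable def rhoN (N : ℕ) : Measure ℝ :=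
  (volume.restrict (Set.Icc (0 : ℝ) 1)).withDensity fun x =>
    ENNReal.ofReal ((Real.log ((N : ℝ) / ((N : ℝ) - 1)))⁻¹ / (x + (N : ℝ) - 1))

/-- `ε_{N,n}`. -/
noncomputable def eps (N n : ℕ) : ℝ :=
  sSup {r : ℝ | ∃ t ∈ Set.Icc (0 : ℝ) 1, ∃ C : Set ℝ, MeasurableSet C ∧
    0 < (rhoN N ((RN N)^[n - 1] ⁻¹' C)).toReal ∧
    r = |(rhoT N t ((RN N)^[n - 1] ⁻¹' C)).toReal
          / (rhoN N ((RN N)^[n - 1] ⁻¹' C)).toReal - 1|}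

/-- The ψ-mixing coefficient `ψ_μ(n)` of the digit sequence under `μ`. -/
noncomputable def psi (N : ℕ) (μ : Measure ℝ) (n : ℕ) : ℝ :=
  sSup {r : ℝ | ∃ k : ℕ, 1 ≤ k ∧ ∃ A B : Set ℝ,
    (∃ S : Set (Fin k → ℤ),
      A = {y | y ∈ Set.Icc (0 : ℝ) 1 ∧ Irrational y ∧ (fun j : Fin k => digit N j y) ∈ S}) ∧
    (∃ C : Set ℝ, MeasurableSet C ∧ B = (RN N)^[k + n - 1] ⁻¹' C) ∧
    (μ A).toReal * (μ B).toReal ≠ 0 ∧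
    r = |(μ (A ∩ B)).toReal / ((μ A).toReal * (μ B).toReal) - 1|}

lemma RN_mem (N : ℕ) (x : ℝ) : 0 ≤ RN N x ∧ RN N x < 1 := by
  unfold RN
  split_ifs
  · norm_num
  · exact ⟨Int.fract_nonneg _, Int.fract_lt_one _⟩

lemma RN_meas (N : ℕ) : Measurable (RN N) := by
  unfold RN
  refine Measurable.ite (measurableSet_eq) measurable_const ?_
  have h : Measurable fun x : ℝ => (N : ℝ) / (1 - x) := by fun_prop
  exact h.fract

lemma RN_iter_meas (N k : ℕ) : Measurable ((RN N)^[k]) := (RN_meas N).iterate k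

lemma digit_meas (N k : ℕ) : Measurable (digit N k) := by
  unfold digit
  have h : Measurable fun x : ℝ => (N : ℝ) / (1 - (RN N)^[k] x) :=
    measurable_const.div (measurable_const.sub (RN_iter_meas N k))
  exact h.floor

lemma image_branch (N : ℕ) (hN : 2 ≤ N) (i : ℤ) (hi : (N : ℤ) ≤ i) (E : Set ℝ) :
    (fun y : ℝ => 1 - (N : ℝ) / (i + y)) '' (Ico 0 1 ∩ E) =
      {x | x ∈ Icc (0 : ℝ) 1 ∧ digit N 0 x = i} ∩ RN N ⁻¹' E := by
  have hN' : (2 : ℝ) ≤ N := by exact_mod_cast hN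
  have hi' : (N : ℝ) ≤ i := by exact_mod_cast hi
  ext x
  constructor
  · rintro ⟨y, ⟨⟨hy0, hy1⟩, hyE⟩, rfl⟩
    have hp : (0 : ℝ) < i + y := by linarith
    have e : (N : ℝ) / (1 - (1 - (N : ℝ) / (i + y))) = i + y := by
      have : (N : ℝ) ≠ 0 := by linarith
      rw [sub_sub_cancel, div_div_cancel₀ this]
    have hq : 0 < (N : ℝ) / (i + y) := by positivity
    have hq1 : (N : ℝ) / (i + y) ≤ 1 := by
      rw [div_le_one hp]; linarith
    have hf : ⌊(i : ℝ) + y⌋ = i := by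
      rw [Int.floor_intCast_add, Int.floor_eq_zero_iff.2 ⟨hy0, hy1⟩, add_zero]
    refine ⟨⟨⟨by simp only; linarith, by simp only; linarith⟩, ?_⟩, ?_⟩
    · simp only [digit, Function.iterate_zero, id]
      rw [e, hf]
    · show RN N _ ∈ E
      have : RN N (1 - (N : ℝ) / (i + y)) = y := by
        unfold RN
        rw [if_neg (by linarith), e, hf]; ring
      simp only
      rw [this]; exact hyE
  · rintro ⟨⟨⟨h0, h1⟩, hd⟩, hE⟩
    have hx1 : x ≠ 1 := by
      rintro rfl
      simp [digit] at hd
      omega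
    have hx : 0 < 1 - x := by
      have := lt_of_le_of_ne h1 hx1
      linarith
    simp only [digit, Function.iterate_zero, id] at hd
    refine ⟨RN N x, ⟨RN_mem N x, hE⟩, ?_⟩
    have : RN N x = (N : ℝ) / (1 - x) - i := by
      unfold RN
      rw [if_neg hx1, hd]
    simp only [this]
    have : (N : ℝ) ≠ 0 := by linarith
    rw [add_sub_cancel, div_div_cancel₀ this]
    ring

lemma lintegral_branch (N : ℕ) (hN : 2 ≤ N) (i : ℤ) (hi : (N : ℤ) ≤ i) (E : Set ℝ)
    (hE : MeasurableSet E) (g : ℝ → ENNReal) :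
    ((volume.restrict (Icc (0 : ℝ) 1)).withDensity g)
      ({x | x ∈ Icc (0 : ℝ) 1 ∧ digit N 0 x = i} ∩ RN N ⁻¹' E) =
    ∫⁻ y in Ico 0 1 ∩ E, ENNReal.ofReal ((N : ℝ) / (i + y) ^ 2) * g (1 - (N : ℝ) / (i + y)) := by
  have hN' : (2 : ℝ) ≤ N := by exact_mod_cast hN
  have hi' : (N : ℝ) ≤ i := by exact_mod_cast hi
  have hm : MeasurableSet {x | x ∈ Icc (0 : ℝ) 1 ∧ digit N 0 x = i} :=
    measurableSet_Icc.inter ((digit_meas N 0) (measurableSet_singleton i))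
  rw [withDensity_apply _ (hm.inter (RN_meas N hE)),
    Measure.restrict_restrict (hm.inter (RN_meas N hE)),
    inter_eq_self_of_subset_left (fun x hx => hx.1.1), ← image_branch N hN i hi,
    lintegral_image_eq_lintegral_abs_deriv_mul (f' := fun y => (N : ℝ) / (i + y) ^ 2)
      (measurableSet_Ico.inter hE)]
  · refine setLIntegral_congr_fun (measurableSet_Ico.inter hE) fun y hy => ?_
    rw [abs_of_nonneg (by positivity)]
  · rintro y ⟨⟨hy0, hy1⟩, -⟩
    have hp : (i : ℝ) + y ≠ 0 := by linarith
    have h := (((hasDerivAt_id' y).const_add (i : ℝ)).fun_inv hp).const_mul (N : ℝ) |>.const_sub 1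
    refine HasDerivAt.hasDerivWithinAt ?_
    have h' := h.congr_deriv (g' := (N : ℝ) / (i + y) ^ 2) (by ring)
    simpa only [div_eq_mul_inv] using h'
  · rintro y ⟨⟨hy0, hy1⟩, -⟩ z ⟨⟨hz0, hz1⟩, -⟩ h
    have hp : (i : ℝ) + y ≠ 0 := by linarith
    have hp' : (i : ℝ) + z ≠ 0 := by linarith
    simp only at h
    have h2 : (N : ℝ) / (i + y) = N / (i + z) := by linarith
    have : (N : ℝ) ≠ 0 := by linarith
    field_simp at h2
    linarith

lemma Icc_Ico_apply (g : ℝ → ENNReal) (E : Set ℝ) (hE : MeasurableSet E) :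
    ((volume.restrict (Icc (0 : ℝ) 1)).withDensity g) E = ∫⁻ y in Ico 0 1 ∩ E, g y := by
  rw [withDensity_apply _ hE, ← restrict_Ico_eq_restrict_Icc, Measure.restrict_restrict hE,
    inter_comm]

lemma rhoT_branch (N : ℕ) (hN : 2 ≤ N) (t : ℝ) (ht : t ∈ Icc (0 : ℝ) 1)
    (i : ℤ) (hi : (N : ℤ) ≤ i) (E : Set ℝ) (hE : MeasurableSet E) :
    rhoT N t ({x | x ∈ Icc (0 : ℝ) 1 ∧ digit N 0 x = i} ∩ RN N ⁻¹' E) =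
      ENNReal.ofReal (((N : ℝ) - 1 + t) / ((i + t - 1) * (i + t))) *
        rhoT N (1 - N / (i + t)) E := by
  have hN' : (2 : ℝ) ≤ N := by exact_mod_cast hN
  have hi' : (N : ℝ) ≤ i := by exact_mod_cast hi
  obtain ⟨ht0, ht1⟩ := ht
  unfold rhoT
  rw [lintegral_branch N hN i hi E hE, Icc_Ico_apply _ _ hE, ← lintegral_const_mul']
  · refine setLIntegral_congr_fun (measurableSet_Ico.inter hE) fun y hy => ?_
    obtain ⟨⟨hy0, hy1⟩, -⟩ := hy
    have h1 : 0 < (i : ℝ) + t := by linarith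
    have h2 : 0 < (i : ℝ) + t - 1 := by linarith
    have h3 : 0 < (i : ℝ) + y := by linarith
    have h4 : 0 < (i : ℝ) + y - 1 + t := by linarith
    have h5 : 0 < (N : ℝ) - 1 + t := by linarith
    rw [← ENNReal.ofReal_mul (by positivity), ← ENNReal.ofReal_mul (by positivity)]
    congr 1
    have e1 : (N : ℝ) - (1 - (1 - N / (i + y))) * (1 - t) = N * (i + y - 1 + t) / (i + y) := by
      field_simp; ring
    have e2 : (N : ℝ) - (1 - y) * (1 - (1 - N / (i + t))) = N * (i + y - 1 + t) / (i + t) := by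
      field_simp; ring
    have e3 : (N : ℝ) - 1 + (1 - N / (i + t)) = N * (i + t - 1) / (i + t) := by
      field_simp; ring
    have : (N : ℝ) ≠ 0 := by linarith
    rw [e1, e2, e3]
    field_simp
  · exact ENNReal.ofReal_ne_top

lemma rhoT_univ (N : ℕ) (hN : 2 ≤ N) (t : ℝ) (ht : t ∈ Icc (0 : ℝ) 1) : rhoT N t univ = 1 := by
  have hN' : (2 : ℝ) ≤ N := by exact_mod_cast hN
  obtain ⟨ht0, ht1⟩ := ht
  have hpos : ∀ x ∈ Icc (0 : ℝ) 1, 0 < (N : ℝ) - (1 - x) * (1 - t) := by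
    rintro x ⟨h0, h1⟩
    nlinarith [mul_nonneg h0 (sub_nonneg.2 ht1)]
  have hpos' : ∀ x ∈ uIcc (0 : ℝ) 1, 0 < (N : ℝ) - (1 - x) * (1 - t) := by
    rwa [uIcc_of_le zero_le_one]
  have hc : ContinuousOn (fun x : ℝ => (N : ℝ) * ((N : ℝ) - 1 + t) / ((N : ℝ) - (1 - x) * (1 - t)) ^ 2)
      (Icc 0 1) := by
    refine ContinuousOn.div (by fun_prop) (by fun_prop) fun x hx => ?_
    have := hpos x hx
    positivity
  have hI : IntegrableOn (fun x : ℝ => (N : ℝ) * ((N : ℝ) - 1 + t) / ((N : ℝ) - (1 - x) * (1 - t)) ^ 2)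
      (Icc 0 1) := hc.integrableOn_Icc
  unfold rhoT
  rw [withDensity_apply _ MeasurableSet.univ, Measure.restrict_univ,
    ← ofReal_integral_eq_lintegral_ofReal hI]
  · rw [integral_Icc_eq_integral_Ioc, ← intervalIntegral.integral_of_le zero_le_one,
      intervalIntegral.integral_eq_sub_of_hasDerivAt
        (f := fun x => (N : ℝ) * x / ((N : ℝ) - (1 - x) * (1 - t)))]
    · have : (N : ℝ) ≠ 0 := by linarith
      simp [this]
    · intro x hx
      have hp := hpos' x hx
      have hd : HasDerivAt (fun x : ℝ => (N : ℝ) - (1 - x) * (1 - t)) (1 - t) x := by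
        have := (((hasDerivAt_id' x).const_sub 1).mul_const (1 - t)).const_sub (N : ℝ)
        exact this.congr_deriv (by ring)
      have := ((hasDerivAt_id' x).const_mul (N : ℝ)).fun_div hd hp.ne'
      exact this.congr_deriv (by ring)
    · refine ContinuousOn.intervalIntegrable ?_
      rwa [uIcc_of_le zero_le_one]
  · filter_upwards [ae_restrict_mem measurableSet_Icc] with x hx
    have := hpos x hx
    have : 0 ≤ (N : ℝ) - 1 + t := by linarith
    simp only [Pi.zero_apply]
    positivity

lemma rhoT_ac (N : ℕ) (t : ℝ) : rhoT N t ≪ volume :=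
  (withDensity_absolutelyContinuous _ _).trans Measure.restrict_le_self.absolutelyContinuous

lemma rhoN_ac (N : ℕ) : rhoN N ≪ volume :=
  (withDensity_absolutelyContinuous _ _).trans Measure.restrict_le_self.absolutelyContinuous

lemma bad_digit (N : ℕ) (i : ℤ) (hi : i < N) :
    {x | x ∈ Icc (0 : ℝ) 1 ∧ digit N 0 x = i} ⊆ {1} := by
  rintro x ⟨⟨h0, h1⟩, hd⟩
  by_contra hx
  have hx : x ≠ 1 := hx
  have hx' : 0 < 1 - x := by
    have := lt_of_le_of_ne h1 hx
    linarith
  simp only [digit, Function.iterate_zero, id] at hd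
  have : (N : ℤ) ≤ ⌊(N : ℝ) / (1 - x)⌋ := by
    rw [Int.le_floor, le_div_iff₀ hx']
    have : (0 : ℝ) ≤ N := by positivity
    push_cast
    nlinarith
  omega

/-- rank `k` cylinder -/
def cyl (N k : ℕ) (w : ℕ → ℤ) : Set ℝ := {y | y ∈ Icc (0 : ℝ) 1 ∧ ∀ j < k, digit N j y = w j}

lemma cyl_meas (N k : ℕ) (w : ℕ → ℤ) : MeasurableSet (cyl N k w) := by
  have : cyl N k w = Icc (0 : ℝ) 1 ∩ ⋂ j, ⋂ (_ : j < k), (digit N j) ⁻¹' {w j} := by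
    ext y; simp [cyl]
  rw [this]
  exact measurableSet_Icc.inter (MeasurableSet.iInter fun j => MeasurableSet.iInter fun _ =>
    digit_meas N j (measurableSet_singleton _))

lemma cyl_succ (N k : ℕ) (w : ℕ → ℤ) : cyl N (k + 1) w =
    {x | x ∈ Icc (0 : ℝ) 1 ∧ digit N 0 x = w 0} ∩ RN N ⁻¹' (cyl N k (fun j => w (j + 1))) := by
  ext x
  constructor
  · rintro ⟨h, hd⟩
    refine ⟨⟨h, hd 0 (by omega)⟩, ⟨(RN_mem N x).1, (RN_mem N x).2.le⟩, fun j hj => ?_⟩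
    have := hd (j + 1) (by omega)
    simpa [digit] using this
  · rintro ⟨⟨h, h0⟩, -, hd⟩
    refine ⟨h, fun j hj => ?_⟩
    cases j with
    | zero => exact h0
    | succ j =>
      have := hd j (by omega)
      simpa [digit] using this

lemma cyl_rhoT (N : ℕ) (hN : 2 ≤ N) (k : ℕ) : ∀ (w : ℕ → ℤ) (t : ℝ), t ∈ Icc (0 : ℝ) 1 →
    ∃ s ∈ Icc (0 : ℝ) 1, ∀ E, MeasurableSet E →
      rhoT N t (cyl N k w ∩ (RN N)^[k] ⁻¹' E) = rhoT N t (cyl N k w) * rhoT N s E := by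
  induction k with
  | zero =>
    intro w t ht
    refine ⟨t, ht, fun E hE => ?_⟩
    have h : ∀ F, MeasurableSet F → rhoT N t (Icc 0 1 ∩ F) = rhoT N t F := by
      intro F hF
      unfold rhoT
      rw [Icc_Ico_apply _ _ hF, Icc_Ico_apply _ _ (measurableSet_Icc.inter hF), ← inter_assoc,
        inter_eq_self_of_subset_left Ico_subset_Icc_self]
    have hc : cyl N 0 w = Icc 0 1 := by ext; simp [cyl]
    have h1 := h univ MeasurableSet.univ
    rw [inter_univ, rhoT_univ N hN t ht] at h1
    rw [hc, h1, one_mul]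
    exact h E hE
  | succ k ih =>
    intro w t ht
    by_cases hi : (N : ℤ) ≤ w 0
    · have hN' : (2 : ℝ) ≤ N := by exact_mod_cast hN
      have hi' : (N : ℝ) ≤ w 0 := by exact_mod_cast hi
      have hs : 1 - (N : ℝ) / (w 0 + t) ∈ Icc (0 : ℝ) 1 := by
        have h1 : 0 < (w 0 : ℝ) + t := by linarith [ht.1]
        have : (N : ℝ) / (w 0 + t) ≤ 1 := by
          rw [div_le_one h1]; linarith [ht.1]
        have : 0 ≤ (N : ℝ) / (w 0 + t) := by positivity
        constructor <;> linarith
      obtain ⟨s, hs', h⟩ := ih (fun j => w (j + 1)) _ hs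
      refine ⟨s, hs', fun E hE => ?_⟩
      have hp : cyl N (k + 1) w ∩ (RN N)^[k + 1] ⁻¹' E =
          {x | x ∈ Icc (0 : ℝ) 1 ∧ digit N 0 x = w 0} ∩
            RN N ⁻¹' (cyl N k (fun j => w (j + 1)) ∩ (RN N)^[k] ⁻¹' E) := by
        rw [cyl_succ, preimage_inter, inter_assoc, Function.iterate_succ, preimage_comp]
      rw [hp, rhoT_branch N hN t ht _ hi _ ((cyl_meas N k _).inter (RN_iter_meas N k hE)),
        h E hE, cyl_succ, rhoT_branch N hN t ht _ hi _ (cyl_meas N k _), mul_assoc]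
    · have hz : rhoT N t (cyl N (k + 1) w) = 0 := by
        refine measure_mono_null (t := {1}) ?_ (rhoT_ac N t (by simp))
        rw [cyl_succ]
        exact inter_subset_left.trans (bad_digit N _ (by omega))
      refine ⟨t, ht, fun E hE => ?_⟩
      rw [hz, zero_mul]
      exact measure_mono_null inter_subset_left hz

lemma L_pos (N : ℕ) (hN : 2 ≤ N) : 0 < Real.log ((N : ℝ) / ((N : ℝ) - 1)) := by
  have hN' : (2 : ℝ) ≤ N := by exact_mod_cast hN
  apply Real.log_pos
  rw [lt_div_iff₀ (by linarith)]
  linarith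

lemma telesc (a : ℝ) (ha : 0 < a) (c : ℝ) (hc : 0 < c) :
    ∑' m : ℕ, ENNReal.ofReal (c / ((a + m) * (a + m + 1))) = ENNReal.ofReal (c / a) := by
  have hs : HasSum (fun m : ℕ => c / ((a + m) * (a + m + 1))) (c / a) := by
    rw [hasSum_iff_tendsto_nat_of_nonneg (fun m => by positivity)]
    have h : ∀ n : ℕ, ∑ m ∈ Finset.range n, c / ((a + m) * (a + m + 1)) = c / a - c / (a + n) := by
      intro n
      induction n with
      | zero => simp
      | succ n ih =>
        rw [Finset.sum_range_succ, ih]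
        have : 0 < a + n := by positivity
        push_cast
        field_simp
        ring
    simp_rw [h]
    have : Tendsto (fun n : ℕ => c / (a + n)) atTop (nhds 0) :=
      tendsto_const_nhds.div_atTop (tendsto_atTop_add_const_left _ _ tendsto_natCast_atTop_atTop)
    simpa using this.const_sub (c / a)
  rw [← hs.tsum_eq, ENNReal.ofReal_tsum_of_nonneg (fun m => by positivity) hs.summable]

lemma rhoN_inv (N : ℕ) (hN : 2 ≤ N) (E : Set ℝ) (hE : MeasurableSet E) :
    rhoN N (RN N ⁻¹' E) = rhoN N E := by
  have hN' : (2 : ℝ) ≤ N := by exact_mod_cast hN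
  have hL := L_pos N hN
  set A : ℕ → Set ℝ := fun m => {x | x ∈ Icc (0 : ℝ) 1 ∧ digit N 0 x = ((N + m : ℕ) : ℤ)} with hA
  have hAm : ∀ m, MeasurableSet (A m) := fun m =>
    measurableSet_Icc.inter ((digit_meas N 0) (measurableSet_singleton _))
  have h1 : rhoN N (RN N ⁻¹' E) = rhoN N (⋃ m, A m ∩ RN N ⁻¹' E) := by
    apply measure_congr
    have h1 : ∀ᵐ x ∂(rhoN N), x ≠ 1 := by
      rw [ae_iff]; simp only [not_not]
      exact rhoN_ac N (by simp)
    have h2 : ∀ᵐ x ∂(rhoN N), x ∈ Icc (0 : ℝ) 1 :=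
      (withDensity_absolutelyContinuous _ _) (ae_restrict_mem measurableSet_Icc)
    filter_upwards [h1, h2] with x hx1 hx2
    apply propext
    show x ∈ RN N ⁻¹' E ↔ x ∈ ⋃ m, A m ∩ RN N ⁻¹' E
    rw [← iUnion_inter]
    constructor
    · intro h
      refine ⟨?_, h⟩
      have : (N : ℤ) ≤ digit N 0 x := by
        by_contra hlt
        exact hx1 (bad_digit N (digit N 0 x) (by omega) ⟨hx2, rfl⟩)
      refine mem_iUnion.2 ⟨(digit N 0 x - N).toNat, hx2, ?_⟩
      push_cast
      omega
    · exact fun h => h.2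
  rw [h1, measure_iUnion]
  · have h3 : ∀ m : ℕ, rhoN N (A m ∩ RN N ⁻¹' E) = ∫⁻ y in Ico 0 1 ∩ E, ENNReal.ofReal
        ((Real.log ((N : ℝ) / ((N : ℝ) - 1)))⁻¹ / ((N - 1 + y + m) * (N - 1 + y + m + 1))) := by
      intro m
      unfold rhoN
      rw [hA, lintegral_branch N hN _ (by push_cast; omega) E hE]
      refine setLIntegral_congr_fun (measurableSet_Ico.inter hE) fun y hy => ?_
      obtain ⟨⟨hy0, hy1⟩, -⟩ := hy
      rw [← ENNReal.ofReal_mul (by positivity)]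
      congr 1
      push_cast
      have hm : (0 : ℝ) ≤ m := by positivity
      have p1 : 0 < (N : ℝ) + m + y := by linarith
      have p2 : 0 < (N : ℝ) - 1 + y + m := by linarith
      have e : 1 - (N : ℝ) / (N + m + y) + N - 1 = N * (N - 1 + y + m) / (N + m + y) := by
        field_simp; ring
      have e2 : (N : ℝ) - 1 + y + m + 1 = N + m + y := by ring
      rw [e, e2]
      have : (N : ℝ) ≠ 0 := by linarith
      field_simp
    simp_rw [h3]
    rw [← lintegral_tsum (fun m => by fun_prop)]
    unfold rhoN
    rw [Icc_Ico_apply _ _ hE]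
    refine setLIntegral_congr_fun (measurableSet_Ico.inter hE) fun y hy => ?_
    obtain ⟨⟨hy0, hy1⟩, -⟩ := hy
    rw [telesc _ (by linarith) _ (inv_pos.2 hL)]
    congr 2
    ring
  · intro m m' hne
    refine Set.disjoint_left.2 fun x hx hx' => hne ?_
    have h1 := hx.1.2
    have h2 := hx'.1.2
    rw [h1] at h2
    have := Nat.cast_injective h2
    omega
  · exact fun m => (hAm m).inter (RN_meas N hE)

lemma rhoN_inv_iter (N : ℕ) (hN : 2 ≤ N) (k : ℕ) (E : Set ℝ) (hE : MeasurableSet E) :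
    rhoN N ((RN N)^[k] ⁻¹' E) = rhoN N E := by
  induction k with
  | zero => simp
  | succ k ih =>
    rw [Function.iterate_succ, preimage_comp, rhoN_inv N hN _ (RN_iter_meas N k hE), ih]

lemma rhoN_fin (N : ℕ) (hN : 2 ≤ N) : IsFiniteMeasure (rhoN N) := by
  have hN' : (2 : ℝ) ≤ N := by exact_mod_cast hN
  have hL := L_pos N hN
  unfold rhoN
  apply isFiniteMeasure_withDensity_ofReal
  refine HasFiniteIntegral.mono' (g := fun _ => (Real.log ((N : ℝ) / ((N : ℝ) - 1)))⁻¹)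
    (integrable_const _).2 ?_
  filter_upwards [ae_restrict_mem measurableSet_Icc] with x hx
  have : 1 ≤ x + N - 1 := by linarith [hx.1]
  have := inv_pos.2 hL
  rw [Real.norm_of_nonneg (by positivity)]
  exact div_le_self this.le (by linarith)

lemma rhoT_le (N : ℕ) (hN : 2 ≤ N) : ∃ K : ℝ, 0 ≤ K ∧ ∀ t ∈ Icc (0 : ℝ) 1, ∀ E, MeasurableSet E →
    rhoT N t E ≤ ENNReal.ofReal K * rhoN N E := by
  have hN' : (2 : ℝ) ≤ N := by exact_mod_cast hN
  have hL := L_pos N hN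
  refine ⟨N * N * (Real.log ((N : ℝ) / ((N : ℝ) - 1)) * N), by positivity, ?_⟩
  rintro t ⟨ht0, ht1⟩ E hE
  unfold rhoT rhoN
  rw [Icc_Ico_apply _ _ hE, Icc_Ico_apply _ _ hE, ← lintegral_const_mul' _ _ ENNReal.ofReal_ne_top]
  refine setLIntegral_mono' (measurableSet_Ico.inter hE) fun y hy => ?_
  obtain ⟨⟨hy0, hy1⟩, -⟩ := hy
  rw [← ENNReal.ofReal_mul (by positivity)]
  apply ENNReal.ofReal_le_ofReal
  have h1 : 1 ≤ (N : ℝ) - (1 - y) * (1 - t) := by nlinarith [mul_nonneg hy0 (sub_nonneg.2 ht1)]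
  have h2 : 1 ≤ ((N : ℝ) - (1 - y) * (1 - t)) ^ 2 := by nlinarith
  have h3 : 0 < y + N - 1 := by linarith
  calc (N : ℝ) * ((N : ℝ) - 1 + t) / ((N : ℝ) - (1 - y) * (1 - t)) ^ 2
      ≤ (N : ℝ) * ((N : ℝ) - 1 + t) :=
        div_le_self (mul_nonneg (by linarith) (by linarith)) h2
    _ ≤ N * N := by nlinarith
    _ ≤ N * N * (N / (y + N - 1)) := by
        apply le_mul_of_one_le_right (by positivity)
        rw [one_le_div h3]; linarith
    _ = _ := by field_simp

lemma eps_bdd (N : ℕ) (hN : 2 ≤ N) (n : ℕ) : BddAbove {r : ℝ | ∃ t ∈ Set.Icc (0 : ℝ) 1, ∃ C : Set ℝ,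
    MeasurableSet C ∧ 0 < (rhoN N ((RN N)^[n - 1] ⁻¹' C)).toReal ∧
    r = |(rhoT N t ((RN N)^[n - 1] ⁻¹' C)).toReal
          / (rhoN N ((RN N)^[n - 1] ⁻¹' C)).toReal - 1|} := by
  obtain ⟨K, hK, h⟩ := rhoT_le N hN
  have := rhoN_fin N hN
  refine ⟨K + 1, ?_⟩
  rintro r ⟨t, ht, C, hC, hpos, rfl⟩
  have h1 := ENNReal.toReal_mono
    (ENNReal.mul_ne_top ENNReal.ofReal_ne_top (measure_ne_top _ _))
    (h t ht _ (RN_iter_meas N (n - 1) hC))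
  rw [ENNReal.toReal_mul, ENNReal.toReal_ofReal hK] at h1
  have h2 := (div_le_iff₀ hpos).2 h1
  have h3 : 0 ≤ (rhoT N t ((RN N)^[n - 1] ⁻¹' C)).toReal
    / (rhoN N ((RN N)^[n - 1] ⁻¹' C)).toReal := by positivity
  rw [abs_le]
  constructor <;> linarith

lemma eps_nonneg (N n : ℕ) : 0 ≤ eps N n := by
  apply Real.sSup_nonneg
  rintro r ⟨t, ht, C, hC, hpos, rfl⟩
  exact abs_nonneg _

lemma eps_bound (N : ℕ) (hN : 2 ≤ N) (n : ℕ) (s : ℝ) (hs : s ∈ Icc (0 : ℝ) 1) (C : Set ℝ)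
    (hC : MeasurableSet C) (hpos : 0 < (rhoN N ((RN N)^[n - 1] ⁻¹' C)).toReal) :
    (rhoN N ((RN N)^[n - 1] ⁻¹' C)).toReal * (1 - eps N n)
        ≤ (rhoT N s ((RN N)^[n - 1] ⁻¹' C)).toReal ∧
      (rhoT N s ((RN N)^[n - 1] ⁻¹' C)).toReal ≤
        (rhoN N ((RN N)^[n - 1] ⁻¹' C)).toReal * (1 + eps N n) := by
  have h : |(rhoT N s ((RN N)^[n - 1] ⁻¹' C)).toReal
          / (rhoN N ((RN N)^[n - 1] ⁻¹' C)).toReal - 1| ≤ eps N n :=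
    le_csSup (eps_bdd N hN n) ⟨s, hs, C, hC, hpos, rfl⟩
  rw [abs_le] at h
  have h1 : 1 - eps N n ≤ (rhoT N s ((RN N)^[n - 1] ⁻¹' C)).toReal
          / (rhoN N ((RN N)^[n - 1] ⁻¹' C)).toReal := by linarith [h.1]
  have h2 : (rhoT N s ((RN N)^[n - 1] ⁻¹' C)).toReal
          / (rhoN N ((RN N)^[n - 1] ⁻¹' C)).toReal ≤ 1 + eps N n := by linarith [h.2]
  rw [le_div_iff₀ hpos] at h1
  rw [div_le_iff₀ hpos] at h2
  constructor <;> linarith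

/-- extend a finite word by zero -/
def ext0 {k : ℕ} (w : Fin k → ℤ) (j : ℕ) : ℤ := if h : j < k then w ⟨j, h⟩ else 0

lemma mem_cyl_ext0 (N k : ℕ) (w : Fin k → ℤ) (y : ℝ) :
    y ∈ cyl N k (ext0 w) ↔ y ∈ Icc (0 : ℝ) 1 ∧ (fun j : Fin k => digit N j y) = w := by
  refine and_congr_right fun _ => ⟨fun h => ?_, fun h j hj => ?_⟩
  · funext j
    have := h j j.2
    simpa [ext0] using this
  · have := congrFun h ⟨j, hj⟩
    simpa [ext0, hj] using this

lemma measure_A (N : ℕ) (t : ℝ) (k : ℕ) (S : Set (Fin k → ℤ))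
    (B : Set ℝ) (hB : MeasurableSet B) :
    rhoT N t ({y | y ∈ Set.Icc (0 : ℝ) 1 ∧ Irrational y ∧
      (fun j : Fin k => digit N j y) ∈ S} ∩ B) = ∑' w : S, rhoT N t (cyl N k (ext0 w.1) ∩ B) := by
  rw [← measure_biUnion (f := fun w => cyl N k (ext0 w) ∩ B) S.to_countable]
  · apply measure_congr
    have h1 : ∀ᵐ x ∂(rhoT N t), Irrational x := by
      apply rhoT_ac N t
      show volume {x : ℝ | Irrational x}ᶜ = 0
      have : {x : ℝ | Irrational x}ᶜ = range ((↑) : ℚ → ℝ) := by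
        ext x; simp [Irrational]
      rw [this]
      exact (countable_range _).measure_zero _
    filter_upwards [h1] with x hx
    apply propext
    show x ∈ ({y | y ∈ Set.Icc (0 : ℝ) 1 ∧ Irrational y ∧
      (fun j : Fin k => digit N j y) ∈ S} ∩ B) ↔ x ∈ ⋃ w ∈ S, cyl N k (ext0 w) ∩ B
    simp only [mem_inter_iff, mem_ofPred_eq, mem_iUnion, mem_cyl_ext0]
    constructor
    · rintro ⟨⟨h, _, hS⟩, hb⟩
      exact ⟨_, hS, ⟨h, rfl⟩, hb⟩
    · rintro ⟨w, hS, ⟨h, rfl⟩, hb⟩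
      exact ⟨⟨h, hx, hS⟩, hb⟩
  · intro w _ w' _ hne
    refine Set.disjoint_left.2 fun x hx hx' => hne ?_
    rw [← ((mem_cyl_ext0 N k w x).1 hx.1).2, ← ((mem_cyl_ext0 N k w' x).1 hx'.1).2]
  · exact fun w _ => (cyl_meas N k _).inter hB

theorem stmt18 (N : ℕ) (hN : 2 ≤ N) (t : ℝ) (ht : t ∈ Set.Icc (0 : ℝ) 1)
    (n : ℕ) (hn : 1 ≤ n) (heps : eps N (n + 1) < 1) :
    psi N (rhoT N t) n ≤ (eps N n + eps N (n + 1)) / (1 - eps N (n + 1)) := by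
  have he := eps_nonneg N n
  have he' := eps_nonneg N (n + 1)
  have hd : 0 < 1 - eps N (n + 1) := by linarith
  have hfinT : ∀ s ∈ Icc (0 : ℝ) 1, IsFiniteMeasure (rhoT N s) := fun s hs =>
    ⟨by rw [rhoT_univ N hN s hs]; simp⟩
  have := hfinT t ht
  have := rhoN_fin N hN
  apply Real.sSup_le _ (by positivity)
  rintro r ⟨k, hk, A, B, ⟨S, hA⟩, ⟨C, hC, hB⟩, hne, rfl⟩
  set D := (RN N)^[n - 1] ⁻¹' C with hD
  have hDm : MeasurableSet D := RN_iter_meas N (n - 1) hC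
  have hBD : B = (RN N)^[k] ⁻¹' D := by
    rw [hB, hD, ← preimage_comp, ← Function.iterate_add]
    congr 2; omega
  have hB2 : B = (RN N)^[n + 1 - 1] ⁻¹' ((RN N)^[k - 1] ⁻¹' C) := by
    rw [hB, ← preimage_comp, ← Function.iterate_add]
    congr 2; omega
  have hBm : MeasurableSet B := by rw [hBD]; exact RN_iter_meas N k hDm
  have hinv : rhoN N B = rhoN N D := by rw [hBD]; exact rhoN_inv_iter N hN k D hDm
  have hAp : 0 < (rhoT N t A).toReal :=
    lt_of_le_of_ne ENNReal.toReal_nonneg (Ne.symm (left_ne_zero_of_mul hne))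
  have hBp : 0 < (rhoT N t B).toReal :=
    lt_of_le_of_ne ENNReal.toReal_nonneg (Ne.symm (right_ne_zero_of_mul hne))
  have hDp : 0 < (rhoN N D).toReal := by
    refine lt_of_le_of_ne ENNReal.toReal_nonneg fun h0 => ?_
    have h1 : rhoN N B = 0 := by
      rw [hinv]
      exact ((ENNReal.toReal_eq_zero_iff _).1 h0.symm).resolve_right (measure_ne_top _ _)
    obtain ⟨K, hK, h⟩ := rhoT_le N hN
    have h2 := h t ht B hBm
    rw [h1, mul_zero] at h2
    rw [le_zero_iff.1 h2] at hBp
    simp at hBp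
  -- bounds on B
  have hb := eps_bound N hN (n + 1) t ht _ (RN_iter_meas N (k - 1) hC)
    (by rw [← hB2, hinv]; exact hDp)
  rw [← hB2, hinv] at hb
  -- bounds on D
  have hbd : ∀ s ∈ Icc (0 : ℝ) 1, _ := fun s hs => eps_bound N hN n s hs C hC hDp
  rw [← hD] at hbd
  set d := (rhoN N D).toReal with hd_def
  have hAB : rhoT N t (A ∩ B) = ∑' w : S, rhoT N t (cyl N k (ext0 w.1) ∩ B) := by
    rw [hA]; exact measure_A N t k S B hBm
  have hAA : rhoT N t A = ∑' w : S, rhoT N t (cyl N k (ext0 w.1)) := by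
    have := measure_A N t k S univ MeasurableSet.univ
    simp only [inter_univ] at this
    rw [hA]; exact this
  have hup : rhoT N t (A ∩ B) ≤ rhoT N t A * ENNReal.ofReal (d * (1 + eps N n)) := by
    rw [hAB, hAA, ← ENNReal.tsum_mul_right]
    refine ENNReal.tsum_le_tsum fun w => ?_
    obtain ⟨s, hs, h⟩ := cyl_rhoT N hN k (ext0 w.1) t ht
    have := hfinT s hs
    rw [hBD, h D hDm]
    gcongr
    rw [← ENNReal.ofReal_toReal (measure_ne_top (rhoT N s) D)]
    exact ENNReal.ofReal_le_ofReal (hbd s hs).2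
  have hlo : rhoT N t A * ENNReal.ofReal (d * (1 - eps N n)) ≤ rhoT N t (A ∩ B) := by
    rw [hAB, hAA, ← ENNReal.tsum_mul_right]
    refine ENNReal.tsum_le_tsum fun w => ?_
    obtain ⟨s, hs, h⟩ := cyl_rhoT N hN k (ext0 w.1) t ht
    have := hfinT s hs
    rw [hBD, h D hDm]
    gcongr
    rw [← ENNReal.ofReal_toReal (measure_ne_top (rhoT N s) D)]
    exact ENNReal.ofReal_le_ofReal (hbd s hs).1
  have hup' := ENNReal.toReal_mono
    (ENNReal.mul_ne_top (measure_ne_top _ _) ENNReal.ofReal_ne_top) hup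
  have hlo' := ENNReal.toReal_mono (measure_ne_top _ _) hlo
  rw [ENNReal.toReal_mul, ENNReal.toReal_ofReal (by positivity)] at hup'
  rw [ENNReal.toReal_mul, ENNReal.toReal_ofReal'] at hlo'
  set a := (rhoT N t A).toReal
  set b := (rhoT N t B).toReal
  set x := (rhoT N t (A ∩ B)).toReal
  set e := eps N n
  set f := eps N (n + 1)
  have hlo'' : a * (d * (1 - e)) ≤ x :=
    le_trans (mul_le_mul_of_nonneg_left (le_max_left _ _) hAp.le) hlo'
  set q := x / a with hq
  have hq1 : q ≤ d * (1 + e) := by rw [hq, div_le_iff₀ hAp]; linarith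
  have hq2 : d * (1 - e) ≤ q := by rw [hq, le_div_iff₀ hAp]; linarith
  have hxq : x / (a * b) - 1 = (q - b) / b := by
    rw [hq]; field_simp
  have hz : |q - b| ≤ d * (e + f) := by
    rw [abs_le]; constructor <;> nlinarith [hb.1, hb.2]
  rw [hxq, abs_div, abs_of_pos hBp, div_le_div_iff₀ hBp hd]
  calc |q - b| * (1 - f) ≤ d * (e + f) * (1 - f) := by gcongr
    _ = (e + f) * (d * (1 - f)) := by ring
    _ ≤ (e + f) * b := by
      apply mul_le_mul_of_nonneg_left hb.1 (by positivity)
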